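/- arXiv:2204.09512 — 2 statements merged into one kernel-verified Lean document; each statement's English description precedes it below -/
import Mathlib

section
/- For any poset P, the set 𝐝(Σ P) of closed d-sets of the Scott space Σ P, ordered by inclusion, is a dcpo, and the Scott space Σ 𝐝(Σ P) together with the map η : Σ P → Σ 𝐝(Σ P), η(x) = ↓x, is a d-reflection of Σ P: η is continuous, Σ 𝐝(Σ P) is a d-space, and for every continuous map f : Σ P → Y to a d-space Y there is a unique continuous map f* : Σ 𝐝(Σ P) → Y with f* ∘ η = f. -/
universe u v

open Set

/-- The specialization order on a topological space: `specLE x y` iff `x ∈ closure {y}`. -/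
def specLE {X : Type*} [TopologicalSpace X] (x y : X) : Prop :=
  x ∈ closure ({y} : Set X)

/-- `a` is an upper bound of `D` with respect to the specialization order. -/
def specUB {X : Type*} [TopologicalSpace X] (D : Set X) (a : X) : Prop :=
  ∀ d ∈ D, specLE d a

/-- `a` is a least upper bound of `D` with respect to the specialization order. -/
def specLUB {X : Type*} [TopologicalSpace X] (D : Set X) (a : X) : Prop :=
  specUB D a ∧ ∀ b, specUB D b → specLE a b

/-- `U` is Scott open with respect to the specialization order. -/
def ScottOpenSpec {X : Type*} [TopologicalSpace X] (U : Set X) : Prop :=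
  (∀ x y, specLE x y → x ∈ U → y ∈ U) ∧
  ∀ D : Set X, D.Nonempty → DirectedOn specLE D → ∀ a, specLUB D a → a ∈ U →
    (D ∩ U).Nonempty

/-- A d-space (monotone convergence space): a T0 space which is a dcpo in its
specialization order and in which every open set is Scott open with respect to
the specialization order. -/
def DSpace (X : Type*) [TopologicalSpace X] : Prop :=
  T0Space X ∧
  (∀ D : Set X, D.Nonempty → DirectedOn specLE D → ∃ a, specLUB D a) ∧
  (∀ U : Set X, IsOpen U → ScottOpenSpec U)

/-- A set is saturated if it is an intersection of open sets. -/
def Saturated {X : Type*} [TopologicalSpace X] (A : Set X) : Prop :=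
  ∃ 𝒰 : Set (Set X), (∀ U ∈ 𝒰, IsOpen U) ∧ A = ⋂₀ 𝒰

/-- A T0 space is well-filtered if every filtered (under reverse inclusion) family of
nonempty compact saturated sets whose intersection is contained in an open set `U`
has a member contained in `U`. -/
def WellFiltered (X : Type*) [TopologicalSpace X] : Prop :=
  T0Space X ∧
  ∀ 𝒦 : Set (Set X), 𝒦.Nonempty →
    (∀ K ∈ 𝒦, K.Nonempty ∧ IsCompact K ∧ Saturated K) →
    DirectedOn (fun A B => B ⊆ A) 𝒦 →
    ∀ U : Set X, IsOpen U → ⋂₀ 𝒦 ⊆ U → ∃ K ∈ 𝒦, K ⊆ U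

/-- A nonempty closed set which is irreducible. -/
def IrredClosed {X : Type*} [TopologicalSpace X] (A : Set X) : Prop :=
  A.Nonempty ∧ IsClosed A ∧
  ∀ F₁ F₂ : Set X, IsClosed F₁ → IsClosed F₂ → A ⊆ F₁ ∪ F₂ → (A ⊆ F₁ ∨ A ⊆ F₂)

/-- A space is sober if every irreducible closed set is the closure of a unique point. -/
def Sober (X : Type*) [TopologicalSpace X] : Prop :=
  ∀ A : Set X, IrredClosed A → ∃! x : X, A = closure ({x} : Set X)

/-- The specialization preorder on a topological space. -/
def specPreorder (Y : Type*) [TopologicalSpace Y] : Preorder Y where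
  le := specLE
  le_refl x := subset_closure rfl
  le_trans x y z hxy hyz :=
    closure_minimal (Set.singleton_subset_iff.mpr hyz) isClosed_closure hxy

/-- A Scott open subset of a poset: an upper set inaccessible by suprema of directed sets. -/
def IsScottOpen {P : Type*} [Preorder P] (U : Set P) : Prop :=
  IsUpperSet U ∧
  ∀ D : Set P, D.Nonempty → DirectedOn (· ≤ ·) D → ∀ a, IsLUB D a → a ∈ U →
    (D ∩ U).Nonempty

/-- The Scott topology on a poset. `Σ P` is `P` equipped with `scottTop P`. -/
def scottTop (P : Type*) [Preorder P] : TopologicalSpace P where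
  IsOpen := IsScottOpen
  isOpen_univ := by
    refine ⟨isUpperSet_univ, fun D hD _ _ _ _ => ?_⟩
    obtain ⟨d, hd⟩ := hD
    exact ⟨d, hd, trivial⟩
  isOpen_inter := by
    rintro U V ⟨hU1, hU2⟩ ⟨hV1, hV2⟩
    refine ⟨hU1.inter hV1, ?_⟩
    rintro D hne hdir a ha ⟨haU, haV⟩
    obtain ⟨d1, hd1D, hd1U⟩ := hU2 D hne hdir a ha haU
    obtain ⟨d2, hd2D, hd2V⟩ := hV2 D hne hdir a ha haV
    obtain ⟨d3, hd3D, h13, h23⟩ := hdir d1 hd1D d2 hd2D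
    exact ⟨d3, hd3D, hU1 h13 hd1U, hV1 h23 hd2V⟩
  isOpen_sUnion := by
    intro S hS
    refine ⟨isUpperSet_sUnion fun s hs => (hS s hs).1, ?_⟩
    rintro D hne hdir a ha ⟨U, hUS, haU⟩
    obtain ⟨d, hdD, hdU⟩ := (hS U hUS).2 D hne hdir a ha haU
    exact ⟨d, hdD, U, hUS, hdU⟩

/-- A dcpo: every nonempty directed subset has a least upper bound. -/
def IsDcpo (P : Type*) [Preorder P] : Prop :=
  ∀ D : Set P, D.Nonempty → DirectedOn (· ≤ ·) D → ∃ a, IsLUB D a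

/-- The way-below relation. -/
def wayBelow {P : Type*} [Preorder P] (x y : P) : Prop :=
  ∀ D : Set P, D.Nonempty → DirectedOn (· ≤ ·) D → ∀ a, IsLUB D a → y ≤ a →
    ∃ d ∈ D, x ≤ d

/-- A poset is Noetherian if every (nonempty) directed subset has a greatest member. -/
def Noetherian (P : Type*) [Preorder P] : Prop :=
  ∀ D : Set P, D.Nonempty → DirectedOn (· ≤ ·) D → ∃ m ∈ D, ∀ d ∈ D, d ≤ m

/-- An ideal: a (nonempty) directed lower set. -/
def IsIdealSet {P : Type*} [Preorder P] (I : Set P) : Prop :=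
  I.Nonempty ∧ DirectedOn (· ≤ ·) I ∧ IsLowerSet I

/-- The Alexandroff topology on a poset: the open sets are the upper sets. -/
def alexTop (P : Type*) [Preorder P] : TopologicalSpace P where
  IsOpen := IsUpperSet
  isOpen_univ := isUpperSet_univ
  isOpen_inter _ _ := IsUpperSet.inter
  isOpen_sUnion _ h := isUpperSet_sUnion h

/-- The space `X_⊤` obtained from `X` by adjoining a new top point `⊤` (here `none`):
the closed sets are the closed sets of `X` together with the whole space. -/
def topTop (X : Type*) [TopologicalSpace X] : TopologicalSpace (Option X) where
  IsOpen V := V = ∅ ∨ ∃ U : Set X, IsOpen U ∧ V = insert none (some '' U)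
  isOpen_univ := by
    refine Or.inr ⟨Set.univ, isOpen_univ, ?_⟩
    ext (_ | a) <;> simp
  isOpen_inter := by
    rintro V W (rfl | ⟨U₁, hU₁, rfl⟩) hW
    · exact Or.inl (by simp)
    rcases hW with rfl | ⟨U₂, hU₂, rfl⟩
    · exact Or.inl (by simp)
    · refine Or.inr ⟨U₁ ∩ U₂, hU₁.inter hU₂, ?_⟩
      ext (_ | a) <;> simp
  isOpen_sUnion := by
    classical
    intro S hS
    by_cases h0 : ⋃₀ S = ∅
    · exact Or.inl h0
    · refine Or.inr ⟨{x : X | some x ∈ ⋃₀ S}, ?_, ?_⟩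
      · have h1 : {x : X | some x ∈ ⋃₀ S} = ⋃ V ∈ S, some ⁻¹' V := by
          ext x; simp [Set.mem_sUnion]
        rw [h1]
        refine isOpen_biUnion fun V hV => ?_
        rcases hS V hV with rfl | ⟨U, hU, rfl⟩
        · rw [Set.preimage_empty]; exact isOpen_empty
        · have h2 : (some ⁻¹' (insert none (some '' U)) : Set X) = U := by
            ext x; simp
          rw [h2]; exact hU
      · have hnone : (none : Option X) ∈ ⋃₀ S := by
          obtain ⟨v, V, hVS, hvV⟩ := Set.nonempty_iff_ne_empty.mpr h0
          rcases hS V hVS with rfl | ⟨U, hU, rfl⟩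
          · exact absurd hvV (by simp)
          · exact ⟨_, hVS, by simp⟩
        ext (_ | a)
        · simp only [Set.mem_insert_iff, true_or, iff_true]
          exact hnone
        · simp [Set.mem_sUnion]

/-- A `𝐊`-set of a space `X` (relative to a class `K` of spaces): a set whose image
under any continuous map to a `𝐊`-space has the closure of a unique point as closure. -/
def IsKSet (K : (Y : Type u) → TopologicalSpace Y → Prop)
    (X : Type u) [tX : TopologicalSpace X] (A : Set X) : Prop :=
  ∀ (Y : Type u) (tY : TopologicalSpace Y), K Y tY →
    ∀ f : X → Y, @Continuous X Y tX tY f →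
      ∃! y : Y, @closure Y tY (f '' A) = @closure Y tY {y}

/-- `𝐊(X)`: the collection of closed `𝐊`-sets of `X`. -/
def KSets (K : (Y : Type u) → TopologicalSpace Y → Prop)
    (X : Type u) [TopologicalSpace X] : Set (Set X) :=
  {A : Set X | IsClosed A ∧ IsKSet K X A}

/-- The lower Vietoris topology on a family `G` of subsets of `X`, generated by the
sets `◊U = {A ∈ G | A ∩ U ≠ ∅}` for `U` open. -/
def lowerVietoris {X : Type*} [TopologicalSpace X] (G : Set (Set X)) :
    TopologicalSpace ↥G :=
  TopologicalSpace.generateFrom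
    {S : Set ↥G | ∃ U : Set X, IsOpen U ∧ S = {A : ↥G | ((A : Set X) ∩ U).Nonempty}}

/-- A class `K` of spaces is adequate if `P_H(𝐊(X))` is a `𝐊`-space for every T0 space `X`. -/
def Adequate (K : (Y : Type u) → TopologicalSpace Y → Prop) : Prop :=
  ∀ (X : Type u) (tX : TopologicalSpace X), @T0Space X tX →
    K ↥(@KSets K X tX) (@lowerVietoris X tX (@KSets K X tX))

/-- `⟨Z, η⟩` is a `𝐊`-reflection of `X`. -/
def IsKReflection (K : (Y : Type u) → TopologicalSpace Y → Prop)
    (X : Type u) (tX : TopologicalSpace X)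
    (Z : Type u) (tZ : TopologicalSpace Z) (η : X → Z) : Prop :=
  K Z tZ ∧ @Continuous X Z tX tZ η ∧
  ∀ (Y : Type u) (tY : TopologicalSpace Y), K Y tY →
    ∀ f : X → Y, @Continuous X Y tX tY f →
      ∃! g : Z → Y, @Continuous Z Y tZ tY g ∧ g ∘ η = f

/-- The carrier of the Johnstone poset `𝕁 = ℕ × (ℕ ∪ {ω})`. -/
structure Johnstone where
  fst : ℕ
  snd : WithTop ℕ

/-- The Johnstone order: `(j, k) ≤ (m, n)` iff `j = m` and `k ≤ n`, or `n = ω` and `k ≤ m`. -/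
instance : PartialOrder Johnstone where
  le p q := (p.fst = q.fst ∧ p.snd ≤ q.snd) ∨ (q.snd = ⊤ ∧ p.snd ≤ (q.fst : WithTop ℕ))
  le_refl p := Or.inl ⟨rfl, le_rfl⟩
  le_trans p q r hpq hqr := by
    rcases hpq with ⟨h1, h2⟩ | ⟨h1, h2⟩ <;> rcases hqr with ⟨h3, h4⟩ | ⟨h3, h4⟩
    · exact Or.inl ⟨h1.trans h3, h2.trans h4⟩
    · exact Or.inr ⟨h3, h2.trans h4⟩
    · have hr : r.snd = ⊤ := top_le_iff.mp (h1 ▸ h4)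
      exact Or.inr ⟨hr, h3 ▸ h2⟩
    · rw [h1] at h4
      exact absurd h4 (by simp)
  le_antisymm p q hpq hqp := by
    obtain ⟨pf, ps⟩ := p
    obtain ⟨qf, qs⟩ := q
    rcases hpq with ⟨h1, h2⟩ | ⟨h1, h2⟩ <;> rcases hqp with ⟨h3, h4⟩ | ⟨h3, h4⟩
    · dsimp at *
      cases h1
      cases le_antisymm h2 h4
      rfl
    · dsimp at *
      rw [h3] at h2
      rw [top_le_iff.mp h2] at h4
      exact absurd h4 (by simp)
    · dsimp at *
      rw [h1] at h4
      rw [top_le_iff.mp h4] at h2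
      exact absurd h2 (by simp)
    · dsimp at *
      rw [h3] at h2
      exact absurd h2 (by simp)

/-- The class of d-spaces. -/
def dClass : (Y : Type u) → TopologicalSpace Y → Prop := fun Y tY => @DSpace Y tY

/-- The class of well-filtered spaces. -/
def wfClass : (Y : Type u) → TopologicalSpace Y → Prop := fun Y tY => @WellFiltered Y tY

/-- The class of sober spaces. -/
def soberClass : (Y : Type u) → TopologicalSpace Y → Prop := fun Y tY => @Sober Y tY

/-!
A continuous map `f` into a d-space `Y` sends each closed d-set `A` to a set whose closure has a
generic point, and `f*` must send `A` to that point. Since `f*` pulls an open `V` back to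
`{A | A ∩ f ⁻¹' V ≠ ∅}`, it is Scott continuous as soon as directed suprema of closed d-sets are
closures of unions. For uniqueness, test the d-set `A` against `η` itself: `A` is the generic point
of `closure (η '' A)`, so a continuous extension of `f` is determined at `A` by `f`. These arguments
work over any space `X` for which `η` is Scott continuous; for `X = Σ P` this holds because closed
sets are closed under directed suprema in `P`.
-/

open Topology

section GenericPoint

variable {X : Type*} [TopologicalSpace X]

theorem isGenericPoint_closure_iff {x : X} {S : Set X} :
    IsGenericPoint x (closure S) ↔ ∀ C, IsClosed C → (x ∈ C ↔ S ⊆ C) := by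
  refine ⟨fun h C hC => ?_, fun h => ?_⟩
  · rw [h.mem_closed_set_iff hC, hC.closure_subset_iff]
  · refine Subset.antisymm (closure_minimal ?_ isClosed_closure)
      (closure_minimal ?_ isClosed_closure)
    · exact singleton_subset_iff.2 ((h _ isClosed_closure).2 subset_closure)
    · exact (h _ isClosed_closure).1 (subset_closure rfl)

theorem DSpace.isGenericPoint_of_specLUB (hX : DSpace X) {D : Set X} (hne : D.Nonempty)
    (hdir : DirectedOn specLE D) {a : X} (ha : specLUB D a) : IsGenericPoint a (closure D) := by
  have ha_mem : a ∈ closure D := by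
    by_contra ha_notMem
    obtain ⟨d, hd, hd_notMem⟩ :=
      (hX.2.2 _ isClosed_closure.isOpen_compl).2 D hne hdir a ha ha_notMem
    exact hd_notMem (subset_closure hd)
  exact Subset.antisymm (closure_minimal (singleton_subset_iff.2 ha_mem) isClosed_closure)
    (closure_minimal ha.1 isClosed_closure)

theorem DSpace.exists_isGenericPoint_closure (hX : DSpace X) {D : Set X} (hne : D.Nonempty)
    (hdir : DirectedOn specLE D) : ∃ a, IsGenericPoint a (closure D) :=
  (hX.2.1 D hne hdir).imp fun _ => hX.isGenericPoint_of_specLUB hne hdir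

end GenericPoint

section ScottTopology

theorem isScott_scottTop (P : Type*) [Preorder P] : @IsScott P univ _ (scottTop P) := by
  let := scott P univ
  have : IsScott P univ := ⟨rfl⟩
  refine @IsScott.mk P univ _ (scottTop P) (TopologicalSpace.ext_iff.2 fun U => ?_)
  exact (and_congr_right' dirSupInaccOn_univ.symm).trans
    (IsScott.isOpen_iff_isUpperSet_and_dirSupInaccOn (D := univ)).symm

variable {P : Type*} [TopologicalSpace P]

theorem mem_iff_subset_of_isClosed_of_isLUB [Preorder P] [IsScott P univ] {C D : Set P}
    (hC : IsClosed C) (hne : D.Nonempty) (hdir : DirectedOn (· ≤ ·) D) {a : P} (ha : IsLUB D a) :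
    a ∈ C ↔ D ⊆ C :=
  ⟨fun haC _ hd => IsScott.isLowerSet_of_isClosed hC (ha.1 hd) haC,
    fun hDC => IsScott.dirSupClosed_of_isClosed hC hDC hne hdir ha⟩

theorem specLE_eq_le [Preorder P] [IsScott P univ] : (specLE : P → P → Prop) = (· ≤ ·) := by
  funext x y
  rw [specLE, IsScott.closure_singleton, mem_Iic]

theorem specLUB_iff_isLUB [Preorder P] [IsScott P univ] {D : Set P} {a : P} :
    specLUB D a ↔ IsLUB D a := by
  simp only [specLUB, specUB, specLE_eq_le]
  rfl

theorem IsDcpo.dSpace [PartialOrder P] [IsScott P univ] (hP : IsDcpo P) : DSpace P := by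
  simp only [DSpace, ScottOpenSpec, specLE_eq_le, specLUB_iff_isLUB]
  refine ⟨inferInstance, hP, fun U hU => ?_⟩
  obtain ⟨hU_upper, hU_inacc⟩ :=
    (IsScott.isOpen_iff_isUpperSet_and_dirSupInaccOn (D := univ)).1 hU
  exact ⟨fun _ _ hxy hx => hU_upper hxy hx,
    fun D hne hdir a ha haU => hU_inacc trivial hne hdir ha haU⟩

end ScottTopology

section DSet

variable {X : Type u} [TopologicalSpace X]

theorem isKSet_dClass_iff {A : Set X} :
    IsKSet dClass X A ↔ ∀ (Y : Type u) [TopologicalSpace Y], DSpace Y →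
      ∀ f : X → Y, Continuous f → ∃ y, IsGenericPoint y (closure (f '' A)) := by
  refine ⟨fun h Y tY hY f hf => ?_, fun h Y tY hY f hf => ?_⟩
  · exact (h Y tY hY f hf).exists.imp fun _ => Eq.symm
  · obtain ⟨y, hy⟩ := h Y hY f hf
    have := hY.1
    exact ⟨y, hy.symm, fun z hz => IsGenericPoint.eq hz.symm hy⟩

theorem isKSet_closure_singleton (x : X) : IsKSet dClass X (closure {x}) :=
  isKSet_dClass_iff.2 fun _ _ _ f hf => ⟨f x, isGenericPoint_closure.image hf⟩

theorem IsKSet.closure_sUnion {𝒟 : Set (Set X)} (hne : 𝒟.Nonempty)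
    (hdir : DirectedOn (· ⊆ ·) 𝒟) (h𝒟 : ∀ A ∈ 𝒟, IsKSet dClass X A) :
    IsKSet dClass X (closure (⋃₀ 𝒟)) := by
  refine isKSet_dClass_iff.2 fun Y _ hY f hf => ?_
  have exists_generic : ∀ A : 𝒟, ∃ y, IsGenericPoint y (closure (f '' (A : Set X))) :=
    fun A => isKSet_dClass_iff.1 (h𝒟 A A.2) Y hY f hf
  choose y hy using exists_generic
  have directed_generic : DirectedOn specLE (range y) := by
    have hmono {A B : 𝒟} (hAB : (A : Set X) ⊆ B) : specLE (y A) (y B) := by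
      rw [specLE, (hy B).def]
      exact closure_mono (image_mono hAB) (hy A).mem
    exact directedOn_range.2 fun A B =>
      (hdir.directed_val A B).imp fun _ => And.imp hmono hmono
  have := hne.to_subtype
  obtain ⟨a, ha⟩ := hY.exists_isGenericPoint_closure (range_nonempty y) directed_generic
  refine ⟨a, ?_⟩
  rw [closure_image_closure hf, isGenericPoint_closure_iff]
  intro C hC
  calc a ∈ C ↔ range y ⊆ C := isGenericPoint_closure_iff.1 ha C hC
    _ ↔ ∀ A : 𝒟, f '' (A : Set X) ⊆ C := range_subset_iff.trans <| forall_congr' fun A =>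
      isGenericPoint_closure_iff.1 (hy A) C hC
    _ ↔ f '' ⋃₀ 𝒟 ⊆ C := by
      simp only [image_subset_iff, sUnion_subset_iff, Subtype.forall]

end DSet

/-- The Scott space `Σ 𝐝(X)` of closed d-sets of `X`. It is a type synonym of `↥(KSets dClass X)`
that carries the Scott topology as an instance. -/
def ScottDSets (X : Type u) [TopologicalSpace X] : Type u := ↥(KSets dClass X)

namespace ScottDSets

section Space

variable {X : Type u} [TopologicalSpace X]

instance : PartialOrder (ScottDSets X) := inferInstanceAs (PartialOrder ↥(KSets dClass X))

instance : TopologicalSpace (ScottDSets X) := scottTop (ScottDSets X)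

instance : IsScott (ScottDSets X) univ := isScott_scottTop (ScottDSets X)

instance : SetLike (ScottDSets X) X := ⟨Subtype.val, Subtype.val_injective⟩

theorem isClosed (A : ScottDSets X) : IsClosed (A : Set X) := A.2.1

theorem isKSet (A : ScottDSets X) : IsKSet dClass X A := A.2.2

theorem exists_isLUB_coe_eq_closure {D : Set (ScottDSets X)} (hne : D.Nonempty)
    (hdir : DirectedOn (· ≤ ·) D) :
    ∃ S : ScottDSets X, IsLUB D S ∧ (S : Set X) = closure (⋃₀ ((↑) '' D)) := by
  have hdir_coe : DirectedOn (· ⊆ ·) ((↑) '' D : Set (Set X)) := hdir.mono_comp fun _ _ => id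
  have hD : ∀ A ∈ ((↑) '' D : Set (Set X)), IsKSet dClass X A :=
    forall_mem_image.2 fun A _ => A.isKSet
  refine ⟨⟨_, isClosed_closure, IsKSet.closure_sUnion (hne.image _) hdir_coe hD⟩, ?_, rfl⟩
  refine isLUB_iff_le_iff.2 fun B => ?_
  exact B.isClosed.closure_subset_iff.trans (sUnion_subset_iff.trans forall_mem_image)

theorem isDcpo : IsDcpo (ScottDSets X) := fun _ hne hdir =>
  (exists_isLUB_coe_eq_closure hne hdir).imp fun _ => And.left

theorem isOpen_setOf_inter_nonempty {U : Set X} (hU : IsOpen U) :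
    IsOpen {A : ScottDSets X | ((A : Set X) ∩ U).Nonempty} := by
  refine ⟨fun A B hAB hA => hA.mono (inter_subset_inter_left U hAB), ?_⟩
  intro D hne hdir S hS hSU
  obtain ⟨T, hT, hT_coe⟩ := exists_isLUB_coe_eq_closure hne hdir
  obtain rfl := hS.unique hT
  rw [mem_ofPred_eq, hT_coe, closure_inter_open_nonempty_iff hU] at hSU
  obtain ⟨x, ⟨_, ⟨A, hA, rfl⟩, hxA⟩, hxU⟩ := hSU
  exact ⟨A, hA, x, hxA, hxU⟩

/-- The unit `η : X → Σ 𝐝(X)`, `η x = closure {x}`; for a Scott space `X = Σ P` it is `x ↦ ↓x`. -/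
def unit (x : X) : ScottDSets X := ⟨closure {x}, isClosed_closure, isKSet_closure_singleton x⟩

theorem unit_le_iff {x : X} {A : ScottDSets X} : unit x ≤ A ↔ x ∈ A :=
  A.isClosed.closure_subset_iff.trans singleton_subset_iff

end Space

section Lift

variable {X Y : Type u} [TopologicalSpace X] [TopologicalSpace Y] {f : X → Y}

/-- The extension `f* : Σ 𝐝(X) → Y` of a continuous map `f : X → Y` to a d-space: it sends `A` to
the generic point of `closure (f '' A)`. -/
noncomputable def lift (hY : DSpace Y) (hf : Continuous f) (A : ScottDSets X) : Y :=
  (isKSet_dClass_iff.1 A.isKSet Y hY f hf).choose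

theorem isGenericPoint_lift (hY : DSpace Y) (hf : Continuous f) (A : ScottDSets X) :
    IsGenericPoint (lift hY hf A) (closure (f '' A)) :=
  (isKSet_dClass_iff.1 A.isKSet Y hY f hf).choose_spec

theorem continuous_lift (hY : DSpace Y) (hf : Continuous f) : Continuous (lift hY hf) := by
  refine continuous_def.2 fun V hV => ?_
  have preimage_eq : lift hY hf ⁻¹' V =
      {A : ScottDSets X | ((A : Set X) ∩ f ⁻¹' V).Nonempty} := by
    ext A
    rw [mem_preimage, (isGenericPoint_lift hY hf A).mem_open_set_iff hV,
      closure_inter_open_nonempty_iff hV, image_inter_nonempty_iff, mem_ofPred_eq]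
  rw [preimage_eq]
  exact isOpen_setOf_inter_nonempty (hV.preimage hf)

theorem lift_comp_unit (hY : DSpace Y) (hf : Continuous f) : lift hY hf ∘ unit = f := by
  have := hY.1
  funext x
  exact (isGenericPoint_lift hY hf (unit x)).eq (isGenericPoint_closure.image hf)

theorem isGenericPoint_closure_image_unit (hη : Continuous (unit : X → ScottDSets X))
    (A : ScottDSets X) : IsGenericPoint A (closure (unit '' (A : Set X))) := by
  have hB := isGenericPoint_lift isDcpo.dSpace hη A
  -- Both points have the same upper bounds `E`, as `Iic E` is closed.
  have hBA : lift isDcpo.dSpace hη A = A := eq_of_forall_ge_iff fun E => by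
    calc lift isDcpo.dSpace hη A ≤ E ↔ unit '' (A : Set X) ⊆ Iic E :=
          isGenericPoint_closure_iff.1 hB (Iic E) isClosed_Iic
      _ ↔ ∀ x ∈ A, unit x ≤ E := image_subset_iff
      _ ↔ A ≤ E := forall₂_congr fun _ _ => unit_le_iff
  rwa [hBA] at hB

theorem eq_lift (hη : Continuous (unit : X → ScottDSets X)) (hY : DSpace Y) (hf : Continuous f)
    {g : ScottDSets X → Y} (hg : Continuous g) (hgf : g ∘ unit = f) : g = lift hY hf := by
  have := hY.1
  funext A
  have hgA := (isGenericPoint_closure_image_unit hη A).image hg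
  rw [closure_image_closure hg, ← image_comp, hgf] at hgA
  exact hgA.eq (isGenericPoint_lift hY hf A)

theorem isKReflection_unit (hη : Continuous (unit : X → ScottDSets X)) :
    IsKReflection dClass X inferInstance (ScottDSets X) inferInstance unit :=
  ⟨isDcpo.dSpace, hη, fun _ _ hY _ hf => ⟨lift hY hf,
    ⟨continuous_lift hY hf, lift_comp_unit hY hf⟩, fun _ hg => eq_lift hη hY hf hg.1 hg.2⟩⟩

end Lift

theorem continuous_unit_of_isScott {P : Type u} [Preorder P] [TopologicalSpace P]
    [IsScott P univ] : Continuous (unit : P → ScottDSets P) := by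
  rw [← IsScott.scottContinuousOn_iff_continuous (D := univ) fun _ _ _ => trivial,
    scottContinuousOn_univ]
  intro D hne hdir a ha
  refine isLUB_iff_le_iff.2 fun B => ?_
  calc unit a ≤ B ↔ D ⊆ B := unit_le_iff.trans <|
        mem_iff_subset_of_isClosed_of_isLUB B.isClosed hne hdir ha
    _ ↔ ∀ d ∈ D, unit d ≤ B := forall₂_congr fun _ _ => unit_le_iff.symm
    _ ↔ B ∈ upperBounds (unit '' D) := (forall_mem_image (p := (· ≤ B))).symm

end ScottDSets

theorem stmt11_general (P : Type u) [Preorder P] :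
    IsDcpo ↥(@KSets dClass P (scottTop P)) ∧
    (∀ x : P, {p : P | p ≤ x} ∈ @KSets dClass P (scottTop P)) ∧
    ∀ η : P → ↥(@KSets dClass P (scottTop P)),
      (∀ x : P, (η x : Set P) = {p : P | p ≤ x}) →
      IsKReflection dClass P (scottTop P) ↥(@KSets dClass P (scottTop P))
        (scottTop ↥(@KSets dClass P (scottTop P))) η := by
  let := scottTop P
  have := isScott_scottTop P
  have coe_unit (x : P) : (ScottDSets.unit x : Set P) = {p : P | p ≤ x} :=
    IsScott.closure_singleton
  refine ⟨ScottDSets.isDcpo, fun x => coe_unit x ▸ (ScottDSets.unit x).2, fun η hη => ?_⟩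
  obtain rfl : η = ScottDSets.unit :=
    funext fun x => Subtype.ext ((hη x).trans (coe_unit x).symm)
  exact ScottDSets.isKReflection_unit ScottDSets.continuous_unit_of_isScott

/-- For any poset `P`, `𝐝(Σ P)` is a dcpo and `⟨Σ 𝐝(Σ P), η⟩` with
`η x = ↓x` is a d-reflection of `Σ P`. -/
theorem stmt11 (P : Type u) [PartialOrder P] :
    IsDcpo ↥(@KSets dClass P (scottTop P)) ∧
    (∀ x : P, {p : P | p ≤ x} ∈ @KSets dClass P (scottTop P)) ∧
    ∀ η : P → ↥(@KSets dClass P (scottTop P)),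
      (∀ x : P, (η x : Set P) = {p : P | p ≤ x}) →
      IsKReflection dClass P (scottTop P) ↥(@KSets dClass P (scottTop P))
        (scottTop ↥(@KSets dClass P (scottTop P))) η :=
  stmt11_general P
end

section
/- Let X be the set of all subsets of ℕ, equipped with the co-countable topology (the closed sets are the countable subsets of X and X itself). Then: (a) X is well-filtered; (b) the sobrification of X is not a Scott space, i.e. there is no poset Q such that P_H(irr_c(X)), the set of irreducible closed subsets of X with the lower Vietoris topology, is homeomorphic to Σ Q. -/
universe u v

open Set

/-! Every open set of the sobrification `P_H(irr_c(X))` has the form `◊U`, so if the whole space is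
an irreducible closed set, then it is an isolated point of the sobrification only if `X` has a dense
point. A Scott space in which ascending chains are finite, on the other hand, carries the
Alexandroff topology, and there a greatest element is isolated. The irreducible closed sets of an
uncountable space with the co-countable topology are the points and the whole space: chains have
length at most two, but no point is dense. Well-filteredness holds because the compact sets are
finite, so that a filtered family of them has a least member. -/

section WellFiltered

variable {X : Type*} [TopologicalSpace X]

theorem finite_of_isCompact_of_isClosed_of_countable
    (hX : ∀ C : Set X, C.Countable → IsClosed C) {K : Set X} (hK : IsCompact K) : K.Finite := by
  by_contra hinf
  obtain ⟨C, hCK, hC, hCinf⟩ := Set.Infinite.exists_subset_countable_infinite hinf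
  have hdiscrete : DiscreteTopology C := discreteTopology_iff_forall_isClosed.2 fun s => by
    rw [← preimage_image_eq s Subtype.val_injective]
    exact (hX _ (hC.mono (Subtype.coe_image_subset C s))).preimage continuous_subtype_val
  exact hCinf ((hK.of_isClosed_subset (hX C hC) hCK).finite ⟨hdiscrete⟩)

theorem exists_forall_subset_of_directedOn_of_finite {α : Type*} {𝒦 : Set (Set α)}
    (hne : 𝒦.Nonempty) (hfin : ∀ K ∈ 𝒦, K.Finite) (hdir : DirectedOn (fun A B => B ⊆ A) 𝒦) :
    ∃ K ∈ 𝒦, ∀ L ∈ 𝒦, K ⊆ L := by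
  obtain ⟨K, hK, hmin⟩ := exists_minimalFor_of_wellFoundedLT (· ∈ 𝒦) Set.ncard hne
  refine ⟨K, hK, fun L hL => ?_⟩
  obtain ⟨M, hM, hMK, hML⟩ := hdir K hK L hL
  have hMK_eq : M = K :=
    eq_of_subset_of_ncard_le hMK (hmin hM (ncard_le_ncard hMK (hfin K hK))) (hfin K hK)
  exact hMK_eq ▸ hML

theorem wellFiltered_of_finite_of_isCompact [T0Space X]
    (hX : ∀ K : Set X, IsCompact K → K.Finite) : WellFiltered X := by
  refine ⟨inferInstance, fun 𝒦 hne h𝒦 hdir U _ hU => ?_⟩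
  obtain ⟨K, hK, hleast⟩ :=
    exists_forall_subset_of_directedOn_of_finite hne (fun K hK => hX K (h𝒦 K hK).2.1) hdir
  exact ⟨K, hK, (subset_sInter hleast).trans hU⟩

end WellFiltered

section ScottTopology

variable {Q : Type*} [Preorder Q]

theorem noetherian_of_wellFoundedGT [WellFoundedGT Q] : Noetherian Q := by
  intro D hne hdir
  obtain ⟨m, hm⟩ := exists_maximal_of_wellFoundedGT (· ∈ D) hne
  exact ⟨m, hm.prop, hdir.is_top_of_is_max hm.prop fun _ hd hmd => hm.le_of_ge hd hmd⟩

theorem isScottOpen_of_noetherian (hQ : Noetherian Q) {U : Set Q} (hU : IsUpperSet U) :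
    IsScottOpen U := by
  refine ⟨hU, fun D hne hdir a ha haU => ?_⟩
  obtain ⟨m, hmD, hm⟩ := hQ D hne hdir
  exact ⟨m, hmD, hU (ha.2 hm) haU⟩

theorem scottTop_specializes_of_le {p q : Q} (hpq : p ≤ q) : @Specializes Q (scottTop Q) q p :=
  let _ := scottTop Q
  specializes_iff_forall_open.2 fun _ hU hp => hU.1 hpq hp

theorem isOpen_of_isUpperSet_of_homeomorph_scottTop {Y : Type*} [TopologicalSpace Y]
    [PartialOrder Y] [WellFoundedGT Y] (hY : ∀ x y : Y, y ⤳ x → x ≤ y)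
    (e : @Homeomorph Y Q _ (scottTop Q)) {U : Set Y} (hU : IsUpperSet U) : IsOpen U := by
  let _ := scottTop Q
  have hmono : Monotone e.symm := fun _ _ hpq =>
    hY _ _ ((scottTop_specializes_of_le hpq).map e.symm.continuous)
  have hstrict : StrictMono e.symm := fun _ _ hpq =>
    (hmono hpq.le).lt_of_ne (e.symm.injective.ne hpq.ne)
  have : WellFoundedGT Q := hstrict.wellFoundedGT
  exact e.symm.isOpen_preimage.1
    (isScottOpen_of_noetherian noetherian_of_wellFoundedGT (hU.preimage hmono))

end ScottTopology

section Sobrification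

/-- The subbasic open set `◊U` of the lower Vietoris topology on `G`: the members of `G` that
meet `U`. -/
def diamond {α : Type*} (G : Set (Set α)) (U : Set α) : Set G :=
  {A | ((A : Set α) ∩ U).Nonempty}

theorem diamond_iUnion {α : Type*} {ι : Sort*} (G : Set (Set α)) (U : ι → Set α) :
    diamond G (⋃ i, U i) = ⋃ i, diamond G (U i) := by
  ext A
  simp only [diamond, inter_iUnion, nonempty_iUnion, mem_iUnion, mem_ofPred_eq]

attribute [local instance] lowerVietoris

variable {X : Type*} [TopologicalSpace X]

theorem isOpen_diamond {G : Set (Set X)} {U : Set X} (hU : IsOpen U) : IsOpen (diamond G U) :=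
  TopologicalSpace.isOpen_generateFrom_of_mem ⟨U, hU, rfl⟩

theorem subset_of_lowerVietoris_specializes {G : Set (Set X)} {A B : G}
    (hB : IsClosed (B : Set X)) (hBA : B ⤳ A) : (A : Set X) ⊆ B := by
  intro x hxA
  by_contra hxB
  obtain ⟨y, hyB, hyBc⟩ := hBA.mem_open (isOpen_diamond hB.isOpen_compl) ⟨x, hxA, hxB⟩
  exact hyBc hyB

/-- The set `irr_c(X)` of irreducible closed subsets, the point set of the sobrification of `X`. -/
abbrev irrClosed (X : Type*) [TopologicalSpace X] : Set (Set X) :=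
  {A | IrredClosed A}

theorem irredClosed_iff {A : Set X} : IrredClosed A ↔ IsIrreducible A ∧ IsClosed A := by
  rw [IsIrreducible, isPreirreducible_iff_isClosed_union_isClosed, IrredClosed]
  tauto

theorem diamond_irrClosed_inter {U V : Set X} (hU : IsOpen U) (hV : IsOpen V) :
    diamond (irrClosed X) (U ∩ V) = diamond (irrClosed X) U ∩ diamond (irrClosed X) V := by
  refine Subset.antisymm (fun A hA => ⟨hA.mono ?_, hA.mono ?_⟩) fun A hA => ?_
  · exact inter_subset_inter_right _ inter_subset_left
  · exact inter_subset_inter_right _ inter_subset_right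
  · exact (irredClosed_iff.1 A.2).1.2 U V hU hV hA.1 hA.2

theorem exists_eq_diamond_of_isOpen {S : Set (irrClosed X)} (hS : IsOpen S) :
    ∃ U, IsOpen U ∧ S = diamond (irrClosed X) U := by
  induction hS with
  | basic _ hS => exact hS
  | univ =>
    have hnonempty : ∀ A, A ∈ diamond (irrClosed X) univ := fun A =>
      A.2.1.mono (subset_inter Subset.rfl (subset_univ _))
    exact ⟨univ, isOpen_univ, (eq_univ_of_forall hnonempty).symm⟩
  | inter S T _ _ ihS ihT =>
    obtain ⟨U, hU, rfl⟩ := ihS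
    obtain ⟨V, hV, rfl⟩ := ihT
    exact ⟨U ∩ V, hU.inter hV, (diamond_irrClosed_inter hU hV).symm⟩
  | sUnion 𝒮 _ ih =>
    choose! U hU hSU using ih
    refine ⟨⋃ S ∈ 𝒮, U S, isOpen_biUnion hU, ?_⟩
    simp only [diamond_iUnion, sUnion_eq_biUnion]
    exact iUnion₂_congr hSU

theorem exists_closure_singleton_eq_of_isOpen_singleton {A : irrClosed X}
    (hA : IsOpen ({A} : Set (irrClosed X))) : ∃ x, closure {x} = (A : Set X) := by
  obtain ⟨U, -, hAU⟩ := exists_eq_diamond_of_isOpen hA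
  obtain ⟨x, -, hxU⟩ : A ∈ diamond (irrClosed X) U := hAU ▸ mem_singleton A
  have hx : IrredClosed (closure {x}) :=
    irredClosed_iff.2 ⟨isIrreducible_singleton.closure, isClosed_closure⟩
  have hmem : (⟨closure {x}, hx⟩ : irrClosed X) ∈ ({A} : Set (irrClosed X)) :=
    hAU ▸ ⟨x, subset_closure rfl, hxU⟩
  exact ⟨x, congrArg Subtype.val (mem_singleton_iff.1 hmem)⟩

theorem isEmpty_homeomorph_scottTop_irrClosed [WellFoundedGT (irrClosed X)]
    (huniv : IrredClosed (univ : Set X)) (hX : ∀ x : X, closure {x} ≠ univ)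
    (Q : Type*) [Preorder Q] :
    IsEmpty (@Homeomorph (irrClosed X) Q _ (scottTop Q)) := by
  refine ⟨fun e => ?_⟩
  have htop : IsUpperSet {(⟨univ, huniv⟩ : irrClosed X)} := by
    rintro A B hAB rfl
    exact Subtype.ext (univ_subset_iff.1 hAB)
  obtain ⟨x, hx⟩ := exists_closure_singleton_eq_of_isOpen_singleton
    (isOpen_of_isUpperSet_of_homeomorph_scottTop
      (fun _ B => subset_of_lowerVietoris_specializes B.2.2.1) e htop)
  exact hX x hx

end Sobrification

/-- The topology of `X` is the co-countable one. It is a predicate on the topology rather than a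
topology on a type synonym, so that it applies to a topology given on any type. -/
def IsCocountable (X : Type*) [TopologicalSpace X] : Prop :=
  ∀ U : Set X, IsOpen U ↔ U = ∅ ∨ Uᶜ.Countable

namespace IsCocountable

variable {X : Type*} [TopologicalSpace X]

theorem isClosed_iff (hX : IsCocountable X) {F : Set X} : IsClosed F ↔ F = univ ∨ F.Countable := by
  rw [← isOpen_compl_iff, hX, compl_compl, compl_empty_iff]

theorem isClosed_of_countable (hX : IsCocountable X) {C : Set X} (hC : C.Countable) : IsClosed C :=
  hX.isClosed_iff.2 (Or.inr hC)

theorem t1Space (hX : IsCocountable X) : T1Space X :=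
  ⟨fun x => hX.isClosed_of_countable (countable_singleton x)⟩

theorem wellFiltered (hX : IsCocountable X) : WellFiltered X :=
  have := hX.t1Space
  wellFiltered_of_finite_of_isCompact fun _ =>
    finite_of_isCompact_of_isClosed_of_countable fun _ => hX.isClosed_of_countable

theorem irredClosed_univ [Uncountable X] (hX : IsCocountable X) : IrredClosed (univ : Set X) := by
  refine ⟨univ_nonempty, isClosed_univ, fun F₁ F₂ hF₁ hF₂ hcover => ?_⟩
  rcases hX.isClosed_iff.1 hF₁ with rfl | hF₁
  · exact Or.inl Subset.rfl
  rcases hX.isClosed_iff.1 hF₂ with rfl | hF₂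
  · exact Or.inr Subset.rfl
  exact absurd ((hF₁.union hF₂).mono hcover) not_countable_univ

theorem subsingleton_or_eq_univ_of_irredClosed (hX : IsCocountable X) {A : Set X}
    (hA : IrredClosed A) : A.Subsingleton ∨ A = univ := by
  obtain ⟨-, hclosed, hirr⟩ := hA
  refine (hX.isClosed_iff.1 hclosed).symm.imp_left fun hcount x hx => ?_
  have hxA : ¬ A ⊆ A \ {x} := fun h => (h hx).2 rfl
  have hAx : A ⊆ {x} := (hirr {x} (A \ {x})
    (hX.isClosed_of_countable (countable_singleton x))
    (hX.isClosed_of_countable (hcount.mono sdiff_subset))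
    (by rw [union_sdiff_self]; exact subset_union_right)).resolve_right hxA
  exact fun y hy => (hAx hy).symm

theorem wellFoundedGT_irrClosed (hX : IsCocountable X) : WellFoundedGT (irrClosed X) := by
  have eq_univ_of_lt {A B : irrClosed X} (hAB : A < B) : (B : Set X) = univ :=
    (hX.subsingleton_or_eq_univ_of_irredClosed B.2).resolve_left fun hB => by
      obtain ⟨a, ha⟩ := A.2.1
      exact hAB.not_ge fun b hb => hB (hAB.le ha) hb ▸ ha
  refine ⟨⟨fun A => ⟨A, fun B hAB => ⟨B, fun C hBC => ?_⟩⟩⟩⟩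
  exact (hBC.ne (Subtype.ext ((eq_univ_of_lt hAB).trans (eq_univ_of_lt hBC).symm))).elim

theorem closure_singleton_ne_univ [Uncountable X] (hX : IsCocountable X) (x : X) :
    closure {x} ≠ univ := by
  rw [(hX.isClosed_of_countable (countable_singleton x)).closure_eq]
  exact fun h => not_countable_univ (h ▸ countable_singleton x)

end IsCocountable

theorem stmt15_general {X : Type*} [Uncountable X] [TopologicalSpace X] (hX : IsCocountable X) :
    WellFiltered X ∧
    ¬ ∃ (Q : Type v) (pQ : PartialOrder Q),
        Nonempty (@Homeomorph (irrClosed X) Q (lowerVietoris (irrClosed X))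
          (@scottTop Q pQ.toPreorder)) := by
  refine ⟨hX.wellFiltered, ?_⟩
  rintro ⟨Q, pQ, ⟨e⟩⟩
  have := hX.wellFoundedGT_irrClosed
  exact (isEmpty_homeomorph_scottTop_irrClosed hX.irredClosed_univ
    hX.closure_singleton_ne_univ Q).false e

/-- The powerset of `ℕ` with the co-countable topology is well-filtered,
but its sobrification is not a Scott space. -/
theorem stmt15 (tX : TopologicalSpace (Set ℕ))
    (ht : ∀ U : Set (Set ℕ), @IsOpen (Set ℕ) tX U ↔ U = ∅ ∨ Uᶜ.Countable) :
    @WellFiltered (Set ℕ) tX ∧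
    ¬ ∃ (Q : Type v) (pQ : PartialOrder Q),
        Nonempty (@Homeomorph ↥{A : Set (Set ℕ) | @IrredClosed (Set ℕ) tX A} Q
          (@lowerVietoris (Set ℕ) tX {A : Set (Set ℕ) | @IrredClosed (Set ℕ) tX A})
          (@scottTop Q pQ.toPreorder)) := by
  have : Uncountable (Set ℕ) := uncountable_iff_forall_not_surjective.2 Function.cantor_surjective
  exact stmt15_general ht
end
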